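/- arXiv:1208.0085 — 2 statements merged into one kernel-verified Lean document; each statement's English description precedes it below -/
import Mathlib

section
/- For every finite simple graph G, |Max(G) - Min(G)| ≤ 1. -/
/-!
The value of the game is monotone in the set of remaining vertices, whoever moves first
(`gameValue_erase_le`). Granted this, suppose Max starts and opens optimally with `uv`; then
`Max(G) = 1 + Min(G - {u,v}) ≤ 1 + Min(G)`, and exchanging the players gives
`Min(G) ≤ 1 + Max(G)`.

Monotonicity is proved by induction on the number of vertices. If Max starts, an optimal opening
in `G - v` is also legal in `G`. If Min starts, take an optimal opening `xy` in `G`. When it avoids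
`v`, Min copies it in `G - v`. When it is `vy`, what is needed is
`Min(G - v) ≤ 1 + Max(G - v - y)`: if `y` has a neighbour `z` in `G - v`, Min opens with `yz`;
otherwise `y` is isolated in `G - v` and can be dropped (`gameValue_congr`), so that any opening
of `G - v - y` does the job by induction.
-/

open Finset

variable {V : Type*} [DecidableEq V]

/-- The legal moves in the matching game on `G` when the set of remaining
(undeleted) vertices is `s`: ordered pairs of adjacent remaining vertices. -/
def matchPlays (G : SimpleGraph V) [DecidableRel G.Adj] (s : Finset V) :
    Finset (V × V) :=
  (s ×ˢ s).filter fun p => G.Adj p.1 p.2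

lemma matchPlays_card {G : SimpleGraph V} [DecidableRel G.Adj] {s : Finset V}
    {p : V × V} (hp : p ∈ matchPlays G s) :
    (s \ {p.1, p.2}).card < s.card := by
  simp only [matchPlays, mem_filter, mem_product] at hp
  refine card_lt_card (Finset.sdiff_ssubset ?_ ⟨p.1, mem_insert_self _ _⟩)
  intro x hx
  rcases mem_insert.mp hx with h | h
  · exact h ▸ hp.1.1
  · exact (mem_singleton.mp h) ▸ hp.1.2

/-- The value of the matching game on the subgraph of `G` induced by the vertex
set `s`, with Max to move if `maxTurn = true` and Min to move otherwise:
the number of *further* edges added to the matching under optimal play. -/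
def gameValue (G : SimpleGraph V) [DecidableRel G.Adj] (maxTurn : Bool)
    (s : Finset V) : ℕ :=
  if h : (matchPlays G s).Nonempty then
    if maxTurn then
      (matchPlays G s).attach.sup
        fun p => 1 + gameValue G false (s \ {p.1.1, p.1.2})
    else
      (matchPlays G s).attach.inf' (by simpa using h)
        fun p => 1 + gameValue G true (s \ {p.1.1, p.1.2})
  else 0
termination_by s.card
decreasing_by
  · exact matchPlays_card p.2
  · exact matchPlays_card p.2

/-- The Max-start game matching number `Max(G)`. -/
noncomputable def gameMax [Fintype V] (G : SimpleGraph V) : ℕ :=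
  letI : DecidableRel G.Adj := Classical.decRel _
  gameValue G true Finset.univ

/-- The Min-start game matching number `Min(G)`. -/
noncomputable def gameMin [Fintype V] (G : SimpleGraph V) : ℕ :=
  letI : DecidableRel G.Adj := Classical.decRel _
  gameValue G false Finset.univ

/-- `M` is a matching in `G`: a set of edges of `G` that are pairwise
vertex-disjoint. -/
def IsMatchingSet (G : SimpleGraph V) (M : Finset (Sym2 V)) : Prop :=
  (∀ e ∈ M, e ∈ G.edgeSet) ∧
    ∀ e ∈ M, ∀ f ∈ M, e ≠ f → ∀ v : V, v ∈ e → v ∉ f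

/-- The matching number `α'(G)`: the maximum size of a matching in `G`. -/
noncomputable def matchingNumber (G : SimpleGraph V) : ℕ :=
  sSup {n | ∃ M : Finset (Sym2 V), IsMatchingSet G M ∧ M.card = n}

section MatchingGame

variable {G : SimpleGraph V} [DecidableRel G.Adj] {s t : Finset V} {p : V × V} {y : V}

lemma mem_matchPlays : p ∈ matchPlays G s ↔ p.1 ∈ s ∧ p.2 ∈ s ∧ G.Adj p.1 p.2 := by
  simp [matchPlays, and_assoc]

lemma gameValue_of_not_nonempty (b : Bool) (h : ¬ (matchPlays G s).Nonempty) :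
    gameValue G b s = 0 := by
  rw [gameValue, dif_neg h]

lemma le_gameValue_true (hp : p ∈ matchPlays G s) :
    1 + gameValue G false (s \ {p.1, p.2}) ≤ gameValue G true s := by
  rw [gameValue.eq_1 G true s, dif_pos ⟨p, hp⟩, if_pos rfl]
  exact Finset.le_sup (f := fun p : {x // x ∈ matchPlays G s} =>
    1 + gameValue G false (s \ {p.1.1, p.1.2})) (mem_attach _ ⟨p, hp⟩)

lemma gameValue_false_le (hp : p ∈ matchPlays G s) :
    gameValue G false s ≤ 1 + gameValue G true (s \ {p.1, p.2}) := by
  rw [gameValue.eq_1 G false s, dif_pos ⟨p, hp⟩, if_neg Bool.false_ne_true]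
  exact Finset.inf'_le (fun p : {x // x ∈ matchPlays G s} =>
    1 + gameValue G true (s \ {p.1.1, p.1.2})) (mem_attach _ ⟨p, hp⟩)

lemma exists_gameValue_true_eq (h : (matchPlays G s).Nonempty) :
    ∃ p ∈ matchPlays G s, gameValue G true s = 1 + gameValue G false (s \ {p.1, p.2}) := by
  rw [gameValue.eq_1 G true s, dif_pos h, if_pos rfl]
  obtain ⟨p, -, hp⟩ := Finset.exists_mem_eq_sup (matchPlays G s).attach (by simpa using h)
    (fun p => 1 + gameValue G false (s \ {p.1.1, p.1.2}))
  exact ⟨p.1, p.2, hp⟩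

lemma exists_gameValue_false_eq (h : (matchPlays G s).Nonempty) :
    ∃ p ∈ matchPlays G s, gameValue G false s = 1 + gameValue G true (s \ {p.1, p.2}) := by
  rw [gameValue.eq_1 G false s, dif_pos h, if_neg Bool.false_ne_true]
  obtain ⟨p, -, hp⟩ := Finset.exists_mem_eq_inf' (s := (matchPlays G s).attach)
    (by simpa using h) (fun p => 1 + gameValue G true (s \ {p.1.1, p.1.2}))
  exact ⟨p.1, p.2, hp⟩

/-- The value depends only on the edges present; in particular isolated vertices are irrelevant. -/
lemma gameValue_congr (b : Bool) (h : matchPlays G s = matchPlays G t) :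
    gameValue G b s = gameValue G b t := by
  induction hn : s.card using Nat.strong_induction_on generalizing s t b with
  | _ n ih =>
    have key : ∀ (c : Bool) (p : V × V), p ∈ matchPlays G s →
        gameValue G c (s \ {p.1, p.2}) = gameValue G c (t \ {p.1, p.2}) := by
      intro c p hp
      refine ih _ (hn ▸ matchPlays_card hp) c ?_ rfl
      ext q
      have hq : q ∈ matchPlays G s ↔ q ∈ matchPlays G t := by rw [h]
      simp only [mem_matchPlays, mem_sdiff] at hq ⊢
      tauto
    by_cases hs : (matchPlays G s).Nonempty
    · have ht := h ▸ hs
      cases b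
      · apply le_antisymm
        · obtain ⟨p, hp, e⟩ := exists_gameValue_false_eq ht
          rw [← h] at hp
          rw [e, ← key _ _ hp]
          exact gameValue_false_le hp
        · obtain ⟨p, hp, e⟩ := exists_gameValue_false_eq hs
          rw [e, key _ _ hp]
          exact gameValue_false_le (h ▸ hp)
      · apply le_antisymm
        · obtain ⟨p, hp, e⟩ := exists_gameValue_true_eq hs
          rw [e, key _ _ hp]
          exact le_gameValue_true (h ▸ hp)
        · obtain ⟨p, hp, e⟩ := exists_gameValue_true_eq ht
          rw [← h] at hp
          rw [e, ← key _ _ hp]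
          exact le_gameValue_true hp
    · rw [gameValue_of_not_nonempty b hs, gameValue_of_not_nonempty b (h ▸ hs)]

lemma sdiff_pair_eq_erase (s : Finset V) (x y : V) : s \ {x, y} = (s.erase x).erase y := by
  ext z
  simp only [mem_sdiff, mem_insert, mem_singleton, mem_erase]
  tauto

/-- If deleting a vertex from a subset of `t.erase y` never raises the value, then Min moving on `t`
yields at most one edge more than Max moving on `t.erase y`. -/
lemma gameValue_false_le_erase
    (ih : ∀ u : Finset V, u ⊆ t.erase y → ∀ v, gameValue G true (u.erase v) ≤ gameValue G true u)
    (hy : y ∈ t) : gameValue G false t ≤ 1 + gameValue G true (t.erase y) := by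
  by_cases hz : ∃ z ∈ t, G.Adj y z
  · obtain ⟨z, hzt, hyz⟩ := hz
    have h1 := gameValue_false_le (p := (y, z)) (mem_matchPlays.2 ⟨hy, hzt, hyz⟩)
    rw [sdiff_pair_eq_erase] at h1
    have h2 := ih _ subset_rfl z
    dsimp only at h1
    omega
  · push Not at hz
    have hplays : matchPlays G t = matchPlays G (t.erase y) := by
      ext ⟨a, c⟩
      simp only [mem_matchPlays, mem_erase]
      refine ⟨fun ⟨ha, hc, hac⟩ => ⟨⟨?_, ha⟩, ⟨?_, hc⟩, hac⟩, by tauto⟩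
      · rintro rfl
        exact hz c hc hac
      · rintro rfl
        exact hz a ha hac.symm
    rw [gameValue_congr false hplays]
    by_cases hne : (matchPlays G (t.erase y)).Nonempty
    · obtain ⟨p, hp⟩ := hne
      have h1 := gameValue_false_le hp
      rw [sdiff_pair_eq_erase] at h1
      have h2 := ih _ subset_rfl p.1
      have h3 := ih _ (erase_subset p.1 _) p.2
      omega
    · rw [gameValue_of_not_nonempty _ hne]
      exact Nat.zero_le _

/-- Deleting a vertex does not raise the value of the game, whoever moves first. -/
lemma gameValue_erase_le (b : Bool) (s : Finset V) (v : V) :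
    gameValue G b (s.erase v) ≤ gameValue G b s := by
  induction hn : s.card using Nat.strong_induction_on generalizing s b v with
  | _ n ih =>
    by_cases hv : v ∈ s
    swap
    · rw [erase_eq_of_notMem hv]
    have comm : ∀ x y : V, s.erase v \ {x, y} = (s \ {x, y}).erase v := by
      intro x y
      ext z
      simp only [mem_sdiff, mem_erase]
      tauto
    cases b
    · by_cases hs : (matchPlays G s).Nonempty
      swap
      · have hs' : ¬ (matchPlays G (s.erase v)).Nonempty := by
          rintro ⟨p, hp⟩
          refine hs ⟨p, ?_⟩
          simp only [mem_matchPlays, mem_erase] at hp ⊢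
          tauto
        rw [gameValue_of_not_nonempty _ hs, gameValue_of_not_nonempty _ hs']
      -- the case in which the optimal opening in `s` uses `v`
      have hit : ∀ y ∈ s, G.Adj v y →
          gameValue G false (s.erase v) ≤ 1 + gameValue G true ((s.erase v).erase y) := by
        intro y hys hvy
        refine gameValue_false_le_erase (fun u hu w => ih _ ?_ true u w rfl)
          (mem_erase.2 ⟨hvy.ne', hys⟩)
        have h1 := card_le_card (hu.trans (erase_subset y _))
        have h2 := card_erase_lt_of_mem hv
        omega
      obtain ⟨⟨x, y⟩, hp, e⟩ := exists_gameValue_false_eq hs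
      obtain ⟨hx, hy, hxy⟩ := mem_matchPlays.1 hp
      dsimp only at e hx hy hxy
      rw [e]
      by_cases hvx : v = x
      · subst hvx
        rw [sdiff_pair_eq_erase]
        exact hit y hy hxy
      by_cases hvy : v = y
      · subst hvy
        rw [pair_comm, sdiff_pair_eq_erase]
        exact hit x hx hxy.symm
      have h1 := gameValue_false_le (G := G) (s := s.erase v) (p := (x, y))
        (mem_matchPlays.2 ⟨mem_erase.2 ⟨Ne.symm hvx, hx⟩, mem_erase.2 ⟨Ne.symm hvy, hy⟩, hxy⟩)
      dsimp only at h1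
      rw [comm] at h1
      have h2 := ih _ (hn ▸ matchPlays_card hp) true _ v rfl
      dsimp only at h2
      omega
    · by_cases hs : (matchPlays G (s.erase v)).Nonempty
      swap
      · rw [gameValue_of_not_nonempty _ hs]
        exact Nat.zero_le _
      obtain ⟨p, hp, e⟩ := exists_gameValue_true_eq hs
      have hp' : p ∈ matchPlays G s := by
        simp only [mem_matchPlays, mem_erase] at hp ⊢
        tauto
      have h1 := le_gameValue_true hp'
      have h2 := ih _ (hn ▸ matchPlays_card hp') false _ v rfl
      rw [comm] at e
      omega

lemma gameValue_sdiff_pair_le (b : Bool) (s : Finset V) (x y : V) :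
    gameValue G b (s \ {x, y}) ≤ gameValue G b s := by
  rw [sdiff_pair_eq_erase]
  exact (gameValue_erase_le b _ y).trans (gameValue_erase_le b s x)

lemma gameValue_true_le (s : Finset V) : gameValue G true s ≤ 1 + gameValue G false s := by
  by_cases hs : (matchPlays G s).Nonempty
  · obtain ⟨p, -, e⟩ := exists_gameValue_true_eq hs
    have := gameValue_sdiff_pair_le (G := G) false s p.1 p.2
    omega
  · simp [gameValue_of_not_nonempty _ hs]

lemma gameValue_false_le_true (s : Finset V) :
    gameValue G false s ≤ 1 + gameValue G true s := by
  by_cases hs : (matchPlays G s).Nonempty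
  · obtain ⟨p, -, e⟩ := exists_gameValue_false_eq hs
    have := gameValue_sdiff_pair_le (G := G) true s p.1 p.2
    omega
  · simp [gameValue_of_not_nonempty _ hs]

end MatchingGame

/-- `|Max(G) - Min(G)| ≤ 1` for every finite simple graph. -/
theorem stmt1 {V : Type*} [Fintype V] [DecidableEq V] (G : SimpleGraph V) :
    |(gameMax G : ℤ) - (gameMin G : ℤ)| ≤ 1 := by
  letI : DecidableRel G.Adj := Classical.decRel _
  have h1 : gameMax G ≤ 1 + gameMin G := gameValue_true_le Finset.univ
  have h2 : gameMin G ≤ 1 + gameMax G := gameValue_false_le_true Finset.univ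
  rw [abs_le]
  constructor <;> omega
end

section
/- If G is a finite simple graph on n vertices with minimum degree δ(G) ≥ ⌊n/2⌋ + 1, then every edge of G lies in a matching of size ⌊n/2⌋. -/
/-!
Take a matching `M` of maximum size among those containing `e`, and suppose that
`2 * #M + 2 ≤ n`, so that two distinct vertices `a`, `b` are missed by `M`. By maximality all
neighbours of `a` and `b` are covered by `M`. An edge `f = xy ≠ e` of `M` receives at most two
edges from `{a, b}`: with three of them, `a` and `b` would be joined to different ends of `f`,
and `f` could be replaced by two edges, keeping `e`. The edge `e` itself receives at most four.
Hence `deg a + deg b ≤ 2 * (#M - 1) + 4 ≤ 2 * ⌊n/2⌋`, contradicting the degree condition.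
-/

open Finset

variable {V : Type*} [DecidableEq V]

/-- Adding an edge with both ends missed by a matching gives a matching with one more edge. -/
lemma IsMatchingSet.insert_edge {V : Type*} [DecidableEq V] {G : SimpleGraph V}
    {M : Finset (Sym2 V)} (hM : IsMatchingSet G M) {a b : V} (hab : G.Adj a b)
    (ha : ∀ f ∈ M, a ∉ f) (hb : ∀ f ∈ M, b ∉ f) :
    IsMatchingSet G (insert s(a, b) M) ∧ (insert s(a, b) M).card = M.card + 1 := by
  refine ⟨⟨?_, ?_⟩, card_insert_of_notMem fun h => ha _ h (Sym2.mem_mk_left a b)⟩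
  · intro f hf
    rcases mem_insert.mp hf with rfl | hf
    · exact hab
    · exact hM.1 f hf
  · intro f hf g hg hfg v hvf hvg
    rcases mem_insert.mp hf with rfl | hf' <;> rcases mem_insert.mp hg with rfl | hg'
    · exact hfg rfl
    · rcases Sym2.mem_iff.mp hvf with rfl | rfl
      exacts [ha g hg' hvg, hb g hg' hvg]
    · rcases Sym2.mem_iff.mp hvg with rfl | rfl
      exacts [ha f hf' hvf, hb f hf' hvf]
    · exact hM.2 f hf' g hg' hfg v hvf hvg

/-- An edge `xy` of a matching can be exchanged for `ax` and `by`, where `a` and `b` are missed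
by the matching. -/
lemma IsMatchingSet.exchange {V : Type*} [DecidableEq V] {G : SimpleGraph V}
    {M : Finset (Sym2 V)} (hM : IsMatchingSet G M) {a b x y : V} (hne : a ≠ b)
    (ha : ∀ f ∈ M, a ∉ f) (hb : ∀ f ∈ M, b ∉ f) (hxy : s(x, y) ∈ M)
    (hax : G.Adj a x) (hby : G.Adj b y) :
    ∃ M', IsMatchingSet G M' ∧ M.erase s(x, y) ⊆ M' ∧ M'.card = M.card + 1 := by
  have hE : IsMatchingSet G (M.erase s(x, y)) :=
    ⟨fun f hf => hM.1 f (mem_of_mem_erase hf), fun f hf g hg =>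
      hM.2 f (mem_of_mem_erase hf) g (mem_of_mem_erase hg)⟩
  have hx : ∀ f ∈ M.erase s(x, y), x ∉ f := fun f hf =>
    hM.2 _ hxy f (mem_of_mem_erase hf) (ne_of_mem_erase hf).symm x (Sym2.mem_mk_left x y)
  have hy : ∀ f ∈ M.erase s(x, y), y ∉ f := fun f hf =>
    hM.2 _ hxy f (mem_of_mem_erase hf) (ne_of_mem_erase hf).symm y (Sym2.mem_mk_right x y)
  have hxney : x ≠ y := (hM.1 _ hxy : G.Adj x y).ne
  have hay : a ≠ y := fun h => ha _ hxy (h ▸ Sym2.mem_mk_right x y)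
  have hbx : b ≠ x := fun h => hb _ hxy (h ▸ Sym2.mem_mk_left x y)
  obtain ⟨h1, c1⟩ := hE.insert_edge hax (fun f hf => ha f (mem_of_mem_erase hf)) hx
  obtain ⟨h2, c2⟩ := h1.insert_edge hby
    (by
      intro f hf hbf
      rcases mem_insert.mp hf with rfl | hf
      · rcases Sym2.mem_iff.mp hbf with h | h
        exacts [hne h.symm, hbx h]
      · exact hb f (mem_of_mem_erase hf) hbf)
    (by
      intro f hf hyf
      rcases mem_insert.mp hf with rfl | hf
      · rcases Sym2.mem_iff.mp hyf with h | h
        exacts [hay h.symm, hxney h.symm]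
      · exact hy f hf hyf)
  refine ⟨_, h2, (subset_insert _ _).trans (subset_insert _ _), ?_⟩
  have := card_erase_add_one hxy
  omega

/-- If all neighbours of `a` are covered by the matching `M`, then `deg a` is at most the sum over
the edges of `M` of the number of ends adjacent to `a`. -/
lemma degree_le_sum_of_covered {V : Type*} [Fintype V] [DecidableEq V] {G : SimpleGraph V}
    [DecidableRel G.Adj] {M : Finset (Sym2 V)} {a : V}
    (h : ∀ v, G.Adj a v → ∃ f ∈ M, v ∈ f) :
    G.degree a ≤ ∑ f ∈ M, (f.toFinset.filter (G.Adj a)).card := by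
  rw [← G.card_neighborFinset_eq_degree]
  refine (card_le_card fun v hv => ?_).trans card_biUnion_le
  have hv' := (G.mem_neighborFinset a v).mp hv
  obtain ⟨f, hf, hvf⟩ := h v hv'
  exact mem_biUnion.mpr ⟨f, hf, mem_filter.mpr ⟨Sym2.mem_toFinset.mpr hvf, hv'⟩⟩

/-- if `δ(G) ≥ ⌊n/2⌋ + 1`, then every edge of `G` lies in a
matching of size `⌊n/2⌋`. -/
theorem stmt10 {V : Type*} [Fintype V] [DecidableEq V] (G : SimpleGraph V)
    [DecidableRel G.Adj] (hd : Fintype.card V / 2 + 1 ≤ G.minDegree)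
    (e : Sym2 V) (he : e ∈ G.edgeSet) :
    ∃ M : Finset (Sym2 V), IsMatchingSet G M ∧ e ∈ M ∧
      M.card = Fintype.card V / 2 := by
  classical
  set n := Fintype.card V with hn
  obtain ⟨M, hM, hmax⟩ := exists_max_image
    (univ.filter fun M : Finset (Sym2 V) => IsMatchingSet G M ∧ e ∈ M) Finset.card
    ⟨{e}, by
      simp only [mem_filter, mem_univ, true_and, mem_singleton, and_true]
      refine ⟨by simpa using he, ?_⟩
      intro f hf g hg hfg
      exact absurd ((mem_singleton.mp hf).trans (mem_singleton.mp hg).symm) hfg⟩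
  simp only [mem_filter, mem_univ, true_and] at hM hmax
  obtain ⟨hM, heM⟩ := hM
  have hcard : ∀ f ∈ M, f.toFinset.card = 2 := fun f hf =>
    Sym2.card_toFinset_of_not_isDiag f (G.not_isDiag_of_mem_edgeSet (hM.1 f hf))
  set U := M.biUnion Sym2.toFinset with hU
  have hUcard : U.card = M.card * 2 := by
    rw [hU, card_biUnion, sum_const_nat hcard]
    intro f hf g hg hfg
    rw [Function.onFun, disjoint_left]
    intro v hvf hvg
    exact hM.2 f hf g hg hfg v (Sym2.mem_toFinset.mp hvf) (Sym2.mem_toFinset.mp hvg)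
  have hUn : U.card ≤ n := card_le_univ U
  refine ⟨M, hM, heM, ?_⟩
  by_contra hne
  have hlt : M.card * 2 + 2 ≤ n := by omega
  have hcompl : 1 < Uᶜ.card := by rw [card_compl]; omega
  obtain ⟨a, ha, b, hb, hab⟩ := one_lt_card.mp hcompl
  have missed : ∀ v ∈ Uᶜ, ∀ f ∈ M, v ∉ f := fun v hv f hf hvf =>
    mem_compl.mp hv (mem_biUnion.mpr ⟨f, hf, Sym2.mem_toFinset.mpr hvf⟩)
  have covered : ∀ v ∈ Uᶜ, ∀ w, G.Adj v w → ∃ f ∈ M, w ∈ f := by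
    intro v hv w hvw
    by_contra! hw
    obtain ⟨h1, h2⟩ := hM.insert_edge hvw (missed v hv) hw
    have := hmax _ ⟨h1, mem_insert_of_mem heM⟩
    omega
  have noswap : ∀ v ∈ Uᶜ, ∀ w ∈ Uᶜ, v ≠ w → ∀ x y, s(x, y) ∈ M → s(x, y) ≠ e →
      G.Adj v x → ¬ G.Adj w y := by
    intro v hv w hw hvw x y hxy hxye hvx hwy
    obtain ⟨M', h1, h2, h3⟩ := hM.exchange hvw (missed v hv) (missed w hw) hxy hvx hwy
    have := hmax _ ⟨h1, h2 (mem_erase.mpr ⟨hxye.symm, heM⟩)⟩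
    omega
  let c : V → Sym2 V → ℕ := fun v f => (f.toFinset.filter (G.Adj v)).card
  have hc : ∀ v, ∀ f ∈ M, c v f ≤ 2 := fun v f hf =>
    (card_filter_le _ _).trans (hcard f hf).le
  have hf2 : ∀ f ∈ M.erase e, c a f + c b f ≤ 2 := by
    intro f hf
    obtain ⟨hfe, hfM⟩ := mem_erase.mp hf
    induction f using Sym2.ind with
    | _ x y =>
      have hxy : x ≠ y := (hM.1 _ hfM : G.Adj x y).ne
      have hyx : s(y, x) = s(x, y) := Sym2.eq_swap
      have h1 := noswap a ha b hb hab x y hfM hfe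
      have h2 := noswap a ha b hb hab y x (hyx ▸ hfM) (hyx ▸ hfe)
      have hcv : ∀ v, c v s(x, y) =
          (if G.Adj v x then 1 else 0) + (if G.Adj v y then 1 else 0) := by
        intro v
        have : (s(x, y)).toFinset = {x, y} := by ext; simp
        simp only [c, this, card_filter, sum_pair hxy]
      rw [hcv, hcv]
      clear * - h1 h2
      split_ifs <;> first | omega | tauto
  have hda : G.degree a ≤ ∑ f ∈ M, c a f := degree_le_sum_of_covered (covered a ha)
  have hdb : G.degree b ≤ ∑ f ∈ M, c b f := degree_le_sum_of_covered (covered b hb)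
  have hsum : ∑ f ∈ M, (c a f + c b f) ≤ (M.erase e).card * 2 + 4 := by
    rw [← sum_erase_add _ _ heM]
    exact add_le_add (sum_le_card_nsmul _ _ 2 hf2) (add_le_add (hc a e heM) (hc b e heM))
  rw [sum_add_distrib] at hsum
  have hma := G.minDegree_le_degree a
  have hmb := G.minDegree_le_degree b
  have := card_erase_add_one heM
  omega
end
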